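/- arXiv:1507.06752 — 2 statements merged into one kernel-verified Lean document; each statement's English description precedes it below -/
import Mathlib

section
/- Let G be an abelian group generated (as a group) by a submonoid P, let Q ⊆ P be a submonoid, and let H be the subgroup of G generated by Q. If P is a finitely generated Q-module (there is a finite subset S ⊆ P with every p ∈ P of the form q + s, q ∈ Q, s ∈ S), then the quotient group G ⧸ H is finite. -/
/-- If an abelian group `G` is generated (as a group) by a submonoid `P`, `Q ⊆ P` is a
submonoid, `H` is the subgroup generated by `Q`, and `P` is a finitely generated
`Q`-module, then the quotient group `G ⧸ H` (realizing `P^gp ⧸ Q^gp`) is finite. -/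
theorem quotient_group_finite_of_finite_module
    (G : Type*) [AddCommGroup G] (P Q : AddSubmonoid G) (hQP : Q ≤ P)
    (hgen : AddSubgroup.closure (P : Set G) = ⊤)
    (S : Finset G) (hSP : ↑S ⊆ (P : Set G))
    (hmod : ∀ p ∈ P, ∃ q ∈ Q, ∃ s ∈ S, p = q + s) :
    Finite (G ⧸ AddSubgroup.closure (Q : Set G)) := by
  have key : ∀ g : G, ∃ a ∈ P, ∃ b ∈ P, g = a - b := by
    intro g
    have hg : g ∈ AddSubgroup.closure (P : Set G) := by rw [hgen]; trivial
    induction hg using AddSubgroup.closure_induction with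
    | mem x hx => exact ⟨x, hx, 0, P.zero_mem, by simp⟩
    | zero => exact ⟨0, P.zero_mem, 0, P.zero_mem, by simp⟩
    | add x y _ _ hx hy =>
      obtain ⟨a, ha, b, hb, rfl⟩ := hx
      obtain ⟨c, hc, d, hd, rfl⟩ := hy
      exact ⟨a + c, P.add_mem ha hc, b + d, P.add_mem hb hd, by abel⟩
    | neg x _ hx =>
      obtain ⟨a, ha, b, hb, rfl⟩ := hx
      exact ⟨b, hb, a, ha, by abel⟩
  refine Finite.of_surjective
    (fun x : S × S => (QuotientAddGroup.mk (x.1.1 - x.2.1) :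
      G ⧸ AddSubgroup.closure (Q : Set G))) ?_
  intro y
  obtain ⟨g, rfl⟩ := QuotientAddGroup.mk_surjective y
  obtain ⟨a, ha, b, hb, rfl⟩ := key g
  obtain ⟨q, hq, s, hs, rfl⟩ := hmod a ha
  obtain ⟨r, hr, t, ht, rfl⟩ := hmod b hb
  refine ⟨(⟨s, hs⟩, ⟨t, ht⟩), ?_⟩
  refine QuotientAddGroup.eq.2 ?_
  have h : -(s - t) + (q + s - (r + t)) = q - r := by abel
  change -(s - t) + (q + s - (r + t)) ∈ _
  rw [h]
  exact AddSubgroup.sub_mem _ (AddSubgroup.subset_closure hq) (AddSubgroup.subset_closure hr)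
end

section
/- Smoothness criterion for monoid algebras: Let P be a fine monoid. The ℂ-algebra ℂ[P] = AddMonoidAlgebra ℂ P is smooth over ℂ (in Mathlib's sense: formally smooth and of finite presentation) if and only if the sharpening P̄ = P/P* is a free commutative monoid, i.e., isomorphic to ℕ^r for some r ∈ ℕ; equivalently (for fine P), if and only if there exist r ∈ ℕ and an isomorphism of monoids P ≅ P* × ℕ^r, where P* denotes the group of additive units of P. -/
/-- Multiplicative characters of `M` lift along square-zero extensions of ℂ-algebras. -/
def CharLift (M : Type) [AddCommMonoid M] : Prop :=
  ∀ (B : Type) [CommRing B] [Algebra ℂ B] (I : Ideal B), I ^ 2 = ⊥ →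
    ∀ f : Multiplicative M →* B ⧸ I, ∃ g : Multiplicative M →* B,
      ∀ x, Ideal.Quotient.mk I (g x) = f x

theorem CharLift.of_equiv {M N : Type} [AddCommMonoid M] [AddCommMonoid N]
    (h : CharLift M) (e : N ≃+ M) : CharLift N := by
  intro B _ _ I hI f
  obtain ⟨g, hg⟩ := h B I hI (f.comp (AddMonoidHom.toMultiplicative e.symm.toAddMonoidHom))
  refine ⟨g.comp (AddMonoidHom.toMultiplicative e.toAddMonoidHom), fun x => ?_⟩
  rw [MonoidHom.comp_apply, hg]
  simp

theorem CharLift.prod {M N : Type} [AddCommMonoid M] [AddCommMonoid N]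
    (h : CharLift M) (h' : CharLift N) : CharLift (M × N) := by
  intro B _ _ I hI f
  obtain ⟨g, hg⟩ := h B I hI (f.comp (AddMonoidHom.toMultiplicative (AddMonoidHom.inl M N)))
  obtain ⟨g', hg'⟩ := h' B I hI (f.comp (AddMonoidHom.toMultiplicative (AddMonoidHom.inr M N)))
  refine ⟨g.comp (AddMonoidHom.toMultiplicative (AddMonoidHom.fst M N)) *
    g'.comp (AddMonoidHom.toMultiplicative (AddMonoidHom.snd M N)), fun x => ?_⟩
  rw [MonoidHom.mul_apply, map_mul, MonoidHom.comp_apply, MonoidHom.comp_apply, hg, hg',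
    MonoidHom.comp_apply, MonoidHom.comp_apply, ← map_mul]
  congr 1
  apply Multiplicative.toAdd.injective
  simp

theorem CharLift.pi {ι : Type} [Fintype ι] {M : ι → Type} [∀ i, AddCommMonoid (M i)]
    (h : ∀ i, CharLift (M i)) : CharLift (∀ i, M i) := by
  classical
  intro B _ _ I hI f
  choose g hg using fun i => h i B I hI
    (f.comp (AddMonoidHom.toMultiplicative (AddMonoidHom.single M i)))
  refine ⟨∏ i, (g i).comp (AddMonoidHom.toMultiplicative (Pi.evalAddMonoidHom M i)), fun x => ?_⟩
  rw [MonoidHom.finsetProd_apply, map_prod]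
  simp only [MonoidHom.comp_apply, hg]
  rw [← map_prod]
  congr 1
  apply Multiplicative.toAdd.injective
  rw [toAdd_prod]
  simp [Finset.univ_sum_single]

theorem charLift_nat : CharLift ℕ := by
  intro B _ _ I hI f
  obtain ⟨b, hb⟩ := Ideal.Quotient.mk_surjective (f (Multiplicative.ofAdd 1))
  refine ⟨powersHom B b, fun x => ?_⟩
  rw [powersHom_apply, map_pow, hb, ← map_pow]
  congr 1
  apply Multiplicative.toAdd.injective
  simp

theorem one_add_pow_of_sq_zero {B : Type} [CommRing B] (x : B) (hx : x ^ 2 = 0) (n : ℕ) :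
    (1 + x) ^ n = 1 + n * x := by
  induction n with
  | zero => simp
  | succ k ih =>
    rw [pow_succ, ih]; push_cast
    linear_combination (k : B) * hx

theorem charLift_zmod (n : ℕ) : CharLift (ZMod n) := by
  intro B _ _ I hI f
  obtain ⟨b, hb⟩ := Ideal.Quotient.mk_surjective (f (Multiplicative.ofAdd 1))
  have hfn : (f (Multiplicative.ofAdd 1)) ^ n = 1 := by
    rw [← map_pow, ← ofAdd_nsmul]; simp
  set i := b ^ n - 1 with hi
  have hiI : i ∈ I := by
    rw [← Ideal.Quotient.eq_zero_iff_mem, hi, map_sub, map_pow, hb, hfn]; simp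
  have hi2 : i ^ 2 = 0 := by
    have := Ideal.pow_mem_pow hiI 2
    rwa [hI, Ideal.mem_bot] at this
  set c : B := algebraMap ℂ B (n : ℂ)⁻¹ with hc
  have hnc : (n : B) * c * i = i := by
    rcases Nat.eq_zero_or_pos n with rfl | h
    · simp [hi]
    · have : (n : B) * c = 1 := by
        rw [hc, ← map_natCast (algebraMap ℂ B) n, ← map_mul, mul_inv_cancel₀, map_one]
        exact_mod_cast h.ne'
      rw [this, one_mul]
  set b' := b * (1 + (- (c * i))) with hb'
  have hb'n : b' ^ n = 1 := by
    rw [hb', mul_pow, one_add_pow_of_sq_zero _ (by linear_combination c ^ 2 * hi2)]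
    have : b ^ n = 1 + i := by rw [hi]; ring
    rw [this]
    linear_combination (-1 - i) * hnc - hi2
  have hmk : Ideal.Quotient.mk I b' = f (Multiplicative.ofAdd 1) := by
    rw [hb', map_mul, hb, map_add, map_neg, map_mul, Ideal.Quotient.eq_zero_iff_mem.mpr hiI]
    simp
  have hunit : IsUnit b' := by
    have h1 : IsUnit (f (Multiplicative.ofAdd (1 : ZMod n))) :=
      (Group.isUnit _).map f
    rw [← hmk] at h1
    exact (IsNilpotent.isUnit_quotient_mk_iff (I := I) ⟨2, hI⟩).mp h1
  obtain ⟨u, hu⟩ := hunit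
  have hun : u ^ n = 1 := by
    apply Units.ext; rw [Units.val_pow_eq_pow_val, hu, hb'n]; simp
  let φ : ZMod n →+ Additive Bˣ := ZMod.lift n
    ⟨zmultiplesHom (Additive Bˣ) (Additive.ofMul u), by
      rw [zmultiplesHom_apply, natCast_zsmul, ← ofMul_pow, hun]; rfl⟩
  refine ⟨(Units.coeHom B).comp (AddMonoidHom.toMultiplicativeLeft φ), fun x => ?_⟩
  obtain ⟨k, hk⟩ := ZMod.intCast_surjective x.toAdd
  let F : Multiplicative ℤ →* (B ⧸ I) := f.comp (AddMonoidHom.toMultiplicative (Int.castAddHom (ZMod n)))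
  let G : Multiplicative ℤ →* (B ⧸ I) := ((Ideal.Quotient.mk I : B →* B ⧸ I).comp
    ((Units.coeHom B).comp (AddMonoidHom.toMultiplicativeLeft φ))).comp
      (AddMonoidHom.toMultiplicative (Int.castAddHom (ZMod n)))
  have hFG : G = F := by
    apply MonoidHom.ext_mint
    have h1 : φ 1 = Additive.ofMul u := by
      have := ZMod.lift_coe n ⟨zmultiplesHom (Additive Bˣ) (Additive.ofMul u), by
        rw [zmultiplesHom_apply, natCast_zsmul, ← ofMul_pow, hun]; rfl⟩ 1
      simpa using this
    simp [F, G, h1, hu, hmk]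
  have := DFunLike.congr_fun hFG (Multiplicative.ofAdd k)
  have hx : x = Multiplicative.ofAdd (k : ZMod n) := by rw [hk]; rfl
  rw [hx]
  exact this

theorem CharLift.formallySmooth {M : Type} [AddCommMonoid M] (h : CharLift M) :
    Algebra.FormallySmooth ℂ (AddMonoidAlgebra ℂ M) := by
  apply Algebra.FormallySmooth.of_comp_surjective
  intro B _ _ I hI f
  obtain ⟨g, hg⟩ := h B I hI ((AddMonoidAlgebra.lift ℂ (B ⧸ I) M).symm f)
  refine ⟨AddMonoidAlgebra.lift ℂ B M g, ?_⟩
  apply (AddMonoidAlgebra.lift ℂ (B ⧸ I) M).symm.injective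
  refine MonoidHom.ext fun x => ?_
  rw [← hg]
  simp

theorem charLift_group (G : Type) [AddCommGroup G] [AddGroup.FG G] : CharLift G := by
  classical
  obtain ⟨n, ι, _, p, hp, e, ⟨f⟩⟩ := AddCommGroup.equiv_free_prod_directSum_zmod G
  refine CharLift.of_equiv (CharLift.prod ?_ ?_) f
  · exact CharLift.of_equiv (CharLift.pi fun _ => charLift_zmod 0)
      (Finsupp.linearEquivFunOnFinite ℤ ℤ (Fin n)).toAddEquiv
  · exact CharLift.of_equiv (CharLift.pi fun i => charLift_zmod (p i ^ e i))
      (DirectSum.addEquivProd _)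

theorem smooth_of_equiv (P : Type) [AddCommMonoid P] (hP : AddMonoid.FG P) (r : ℕ)
    (e : P ≃+ AddUnits P × (Fin r → ℕ)) : Algebra.Smooth ℂ (AddMonoidAlgebra ℂ P) := by
  have : AddMonoid.FG (AddUnits P) :=
    AddMonoid.fg_of_surjective ((AddMonoidHom.fst _ _).comp e.toAddMonoidHom)
      (Prod.fst_surjective.comp e.surjective)
  have : AddGroup.FG (AddUnits P) := AddGroup.fg_iff_addMonoid_fg.mpr this
  constructor
  · exact ((CharLift.prod (charLift_group _) (CharLift.pi fun _ => charLift_nat)).of_equiv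
      e).formallySmooth
  · exact Algebra.FinitePresentation.of_finiteType.mp inferInstance

/-- Elements of `ℂ[Q]` supported in degrees at least `n`. -/
def degIdeal {Q : Type} [AddCommMonoid Q] (deg : Q →+ ℕ) (n : ℕ) :
    Ideal (AddMonoidAlgebra ℂ Q) where
  carrier := {f | ∀ q, f.coeff q ≠ 0 → n ≤ deg q}
  add_mem' := by
    intro a b ha hb q hq
    by_cases h : a.coeff q = 0
    · apply hb; intro h'; apply hq; simp [h, h']
    · exact ha q h
  zero_mem' := by intro q hq; simp at hq
  smul_mem' := by
    classical
    intro c f hf q hq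
    have := AddMonoidAlgebra.support_coeff_mul_subset c f (Finsupp.mem_support_iff.mpr hq)
    obtain ⟨a, -, b, hb, rfl⟩ := Finset.mem_add.mp this
    have := hf b (Finsupp.mem_support_iff.mp hb)
    rw [map_add]; omega

theorem degIdeal_mul {Q : Type} [AddCommMonoid Q] (deg : Q →+ ℕ) (m n : ℕ) :
    degIdeal deg m * degIdeal deg n ≤ degIdeal deg (m + n) := by
  classical
  rw [Ideal.mul_le]
  intro c hc f hf q hq
  have := AddMonoidAlgebra.support_coeff_mul_subset c f (Finsupp.mem_support_iff.mpr hq)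
  obtain ⟨a, ha, b, hb, rfl⟩ := Finset.mem_add.mp this
  have := hf b (Finsupp.mem_support_iff.mp hb)
  have := hc a (Finsupp.mem_support_iff.mp ha)
  rw [map_add]; omega

theorem degIdeal_anti {Q : Type} [AddCommMonoid Q] (deg : Q →+ ℕ) {m n : ℕ} (h : m ≤ n) :
    degIdeal deg n ≤ degIdeal deg m := fun _ hf q hq => h.trans (hf q hq)

theorem isNilpotent_of_mul_self_le_bot {A : Type} [CommRing A] (I : Ideal A) (h : I * I ≤ ⊥) :
    IsNilpotent I := by
  refine ⟨2, ?_⟩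
  have h2 : I ^ 2 = I * I := pow_two I
  exact h2.trans (le_bot_iff.mp h)

theorem injective_of_smooth {P Q : Type} [AddCommMonoid P] [AddCommMonoid Q]
    [Algebra.FormallySmooth ℂ (AddMonoidAlgebra ℂ P)]
    (π : Q →+ P) (hπ : Function.Surjective π) (deg : Q →+ ℕ)
    (hdeg : ∀ q, 2 ≤ deg q → ∃ a b, q = a + b ∧ 1 ≤ deg a ∧ 1 ≤ deg b)
    (hfib : ∀ q, deg q ≤ 1 → ∀ q', π q' = π q → q' = q) : Function.Injective π := by
  classical
  let Φ : AddMonoidAlgebra ℂ Q →ₐ[ℂ] AddMonoidAlgebra ℂ P := AddMonoidAlgebra.mapDomainAlgHom ℂ ℂ π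
  have hΦs : ∀ q c, Φ (AddMonoidAlgebra.single q c) = AddMonoidAlgebra.single (π q) c := by
    intro q c; simp [Φ]
  have hΦ : Function.Surjective Φ := by
    intro f
    induction f using AddMonoidAlgebra.induction_linear with
    | zero => exact ⟨0, map_zero _⟩
    | add f g hf hg =>
      obtain ⟨a, rfl⟩ := hf
      obtain ⟨b, rfl⟩ := hg
      exact ⟨a + b, map_add _ _ _⟩
    | single p c =>
      obtain ⟨q, rfl⟩ := hπ p
      exact ⟨_, hΦs q c⟩
  let K : Ideal (AddMonoidAlgebra ℂ Q) := RingHom.ker Φ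
  have hK2 : K ≤ degIdeal deg 2 := by
    intro f hf q hq
    by_contra hlt
    apply hq
    have h0 : (Φ f).coeff (π q) = 0 := by
      have : Φ f = 0 := hf
      rw [this]; simp
    rw [← h0]
    change f.coeff q = (Finsupp.mapDomain π f.coeff) (π q)
    rw [Finsupp.mapDomain, Finsupp.sum_apply, Finsupp.sum, Finset.sum_eq_single q]
    · simp
    · intro q' _ hne
      rw [Finsupp.single_apply, if_neg]
      intro h; exact hne (hfib q (by omega) q' h)
    · intro h; simpa using h
  have hK1 : K ≤ degIdeal deg 1 := hK2.trans (degIdeal_anti deg (by norm_num))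
  let J : Ideal (AddMonoidAlgebra ℂ Q) := degIdeal deg 1 * K
  have hJK : J ≤ K := Ideal.mul_le_right
  let g : (AddMonoidAlgebra ℂ Q ⧸ J) →ₐ[ℂ] AddMonoidAlgebra ℂ P :=
    Ideal.Quotient.liftₐ J Φ (fun a ha => hJK ha)
  have hgmk : ∀ s, g (Ideal.Quotient.mk J s) = Φ s := fun s => rfl
  have hg : Function.Surjective g := by
    intro p
    obtain ⟨s, rfl⟩ := hΦ p
    exact ⟨_, hgmk s⟩
  have hgn : IsNilpotent (RingHom.ker (g : (AddMonoidAlgebra ℂ Q ⧸ J) →+* AddMonoidAlgebra ℂ P)) := by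
    suffices h2 : RingHom.ker (g : (AddMonoidAlgebra ℂ Q ⧸ J) →+* AddMonoidAlgebra ℂ P) *
        RingHom.ker (g : (AddMonoidAlgebra ℂ Q ⧸ J) →+* AddMonoidAlgebra ℂ P) ≤ ⊥ from
      isNilpotent_of_mul_self_le_bot _ h2
    rw [Ideal.mul_le]
    intro a ha b hb
    obtain ⟨a, rfl⟩ := Ideal.Quotient.mk_surjective a
    obtain ⟨b, rfl⟩ := Ideal.Quotient.mk_surjective b
    rw [← map_mul, Ideal.mem_bot, Ideal.Quotient.eq_zero_iff_mem]
    exact Ideal.mul_mem_mul (hK1 (show a ∈ K from ha)) (show b ∈ K from hb)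
  let σ := Algebra.FormallySmooth.liftOfSurjective (AlgHom.id ℂ _) g hg hgn
  have hσ : ∀ x, g (σ x) = x := fun x =>
    Algebra.FormallySmooth.liftOfSurjective_apply (AlgHom.id ℂ _) g hg hgn x
  have hmul : ∀ a ∈ degIdeal deg 1, ∀ b ∈ degIdeal deg 1,
      σ (Φ (a * b)) = Ideal.Quotient.mk J (a * b) := by
    intro a ha b hb
    obtain ⟨s, hs⟩ := Ideal.Quotient.mk_surjective (σ (Φ a))
    obtain ⟨t, ht⟩ := Ideal.Quotient.mk_surjective (σ (Φ b))
    have hsK : s - a ∈ K := by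
      change Φ (s - a) = 0
      rw [map_sub, ← hgmk s, hs, hσ, sub_self]
    have htK : t - b ∈ K := by
      change Φ (t - b) = 0
      rw [map_sub, ← hgmk t, ht, hσ, sub_self]
    rw [map_mul, map_mul, ← hs, ← ht, ← map_mul, Ideal.Quotient.eq]
    have : s * t - a * b = a * (t - b) + b * (s - a) + (s - a) * (t - b) := by ring
    rw [this]
    exact J.add_mem (J.add_mem (Ideal.mul_mem_mul ha htK) (Ideal.mul_mem_mul hb hsK))
      (Ideal.mul_mem_mul (hK1 hsK) htK)
  have hsingle : ∀ q c, 1 ≤ deg q → AddMonoidAlgebra.single q c ∈ degIdeal deg 1 := by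
    intro q c hq q' hq'
    rw [AddMonoidAlgebra.coeff_single, Finsupp.single_apply] at hq'
    split_ifs at hq' with h
    · rwa [← h]
    · exact absurd rfl hq'
  have hF2 : ∀ f ∈ degIdeal deg 2, σ (Φ f) = Ideal.Quotient.mk J f := by
    intro f hf
    rw [← AddMonoidAlgebra.sum_coeff_single f, Finsupp.sum]
    simp only [map_sum]
    refine Finset.sum_congr rfl fun q hq => ?_
    obtain ⟨a, b, hab, ha, hb⟩ := hdeg q (hf q (Finsupp.mem_support_iff.mp hq))
    have : AddMonoidAlgebra.single q (f.coeff q) =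
        AddMonoidAlgebra.single a (f.coeff q) * AddMonoidAlgebra.single b (1 : ℂ) := by
      rw [AddMonoidAlgebra.single_mul_single, mul_one, hab]
    rw [this]
    exact hmul _ (hsingle _ _ ha) _ (hsingle _ _ hb)
  have hKJ : K ≤ J := by
    intro f hf
    have := hF2 f (hK2 hf)
    rw [show Φ f = 0 from hf, map_zero] at this
    exact Ideal.Quotient.eq_zero_iff_mem.mp this.symm
  have hKn : ∀ n, K ≤ degIdeal deg n := by
    intro n
    induction n with
    | zero => intro f _ q _; exact Nat.zero_le _
    | succ n ih =>
      calc K ≤ J := hKJ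
        _ ≤ degIdeal deg 1 * degIdeal deg n := Ideal.mul_mono le_rfl ih
        _ ≤ degIdeal deg (1 + n) := degIdeal_mul deg 1 n
        _ = _ := by rw [add_comm]
  intro x y hxy
  by_contra hne
  have hmem : AddMonoidAlgebra.single x (1 : ℂ) - AddMonoidAlgebra.single y 1 ∈ K := by
    change Φ _ = 0
    rw [map_sub, hΦs, hΦs, hxy, sub_self]
  have := hKn (deg x + 1) hmem x (by simp [Ne.symm hne])
  omega

theorem exists_equiv_of_smooth (P : Type) [AddCommMonoid P] [IsCancelAdd P] (hP : AddMonoid.FG P)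
    [Algebra.FormallySmooth ℂ (AddMonoidAlgebra ℂ P)] :
    ∃ r : ℕ, Nonempty (P ≃+ AddUnits P × (Fin r → ℕ)) := by
  classical
  let U : Set P := Set.range (AddUnits.val : AddUnits P → P)
  have hex : ∃ n : ℕ, ∃ T : Finset P, T.card = n ∧ AddSubmonoid.closure (U ∪ T) = ⊤ := by
    obtain ⟨S, hS⟩ := hP.fg_top
    refine ⟨_, S, rfl, top_le_iff.mp ?_⟩
    rw [← hS]
    exact AddSubmonoid.closure_mono Set.subset_union_right
  obtain ⟨T, hTc, hT⟩ := Nat.find_spec hex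
  have hmin : ∀ p ∈ T, p ∉ AddSubmonoid.closure (U ∪ (T.erase p : Finset P)) := by
    intro p hp hmem
    refine Nat.find_min hex (m := (T.erase p).card) ?_ ⟨T.erase p, rfl, top_le_iff.mp ?_⟩
    · rw [← hTc]; exact Finset.card_erase_lt_of_mem hp
    · rw [← hT, AddSubmonoid.closure_le]
      rintro x (hx | hx)
      · exact AddSubmonoid.subset_closure (Or.inl hx)
      · by_cases h : x = p
        · rw [h]; exact hmem
        · exact AddSubmonoid.subset_closure (Or.inr (Finset.mem_coe.mpr (Finset.mem_erase.mpr ⟨h, hx⟩)))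
  have hnu : ∀ p ∈ T, ¬ IsAddUnit p := fun p hp ⟨u, hu⟩ =>
    hmin p hp (AddSubmonoid.subset_closure (Or.inl ⟨u, hu⟩))
  let ψ : (T → ℕ) →+ P :=
    { toFun := fun v => ∑ i, v i • (i : P)
      map_zero' := by simp
      map_add' := by intro v w; simp [add_nsmul, Finset.sum_add_distrib] }
  have hψ : ∀ v, ψ v = ∑ i, v i • (i : P) := fun v => rfl
  let π : AddUnits P × (T → ℕ) →+ P := (AddUnits.coeHom P).coprod ψ
  have hπ : ∀ u v, π (u, v) = u + ψ v := fun u v => rfl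
  have hψ1 : ∀ i : T, ψ (Pi.single i 1) = i := by
    intro i
    rw [hψ, Finset.sum_eq_single i]
    · simp
    · intro j _ hj; simp [Pi.single_eq_of_ne hj]
    · simp
  let deg : AddUnits P × (T → ℕ) →+ ℕ :=
    { toFun := fun q => ∑ i, q.2 i
      map_zero' := by simp
      map_add' := by intro v w; simp [Finset.sum_add_distrib] }
  have hdegd : ∀ q, deg q = ∑ i, q.2 i := fun q => rfl
  have hsurj : Function.Surjective π := by
    rw [← AddMonoidHom.mrange_eq_top, ← top_le_iff, ← hT, AddSubmonoid.closure_le]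
    rintro x (⟨u, rfl⟩ | hx)
    · exact ⟨(u, 0), by rw [hπ, map_zero, add_zero]⟩
    · exact ⟨(0, Pi.single ⟨x, hx⟩ 1), by rw [hπ, hψ1]; simp⟩
  have hsplit : ∀ (v : T → ℕ) i, v i ≠ 0 → ∃ w : T → ℕ, v = Pi.single i 1 + w := by
    intro v i hi
    refine ⟨v - Pi.single i 1, ?_⟩
    ext j
    by_cases h : j = i
    · subst h; simp; omega
    · simp [Pi.single_eq_of_ne h]
  -- if `ψ v` is a unit then `v = 0`
  have hunit : ∀ v, IsAddUnit (ψ v) → v = 0 := by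
    intro v hv
    by_contra hne
    obtain ⟨i, hi⟩ := Function.ne_iff.mp hne
    obtain ⟨w, rfl⟩ := hsplit v i hi
    rw [map_add, hψ1] at hv
    exact hnu i i.2 (isAddUnit_of_add_isAddUnit_left hv)
  have hzero : ∀ (u u' : AddUnits P) v, (u' : P) + ψ v = u → v = 0 ∧ u' = u := by
    intro u u' v h
    have hv : v = 0 := hunit v (isAddUnit_of_add_isAddUnit_right (x := (u' : P)) (h ▸ u.isAddUnit))
    refine ⟨hv, AddUnits.ext ?_⟩
    rw [hv, map_zero, add_zero] at h
    exact h
  have hsingle1 : ∀ i : T, ∑ j, (Pi.single i 1 : T → ℕ) j = 1 := by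
    intro i; simp
  have hinj : Function.Injective π := by
    refine injective_of_smooth π hsurj deg ?_ ?_
    · rintro ⟨u, v⟩ hq
      rw [hdegd] at hq
      obtain ⟨i, -, hi⟩ := Finset.exists_ne_zero_of_sum_ne_zero (show ∑ i, v i ≠ 0 by
        simp only at hq; omega)
      obtain ⟨w, rfl⟩ := hsplit v i hi
      refine ⟨(u, Pi.single i 1), (0, w), by simp, ?_, ?_⟩
      · rw [hdegd]; exact (hsingle1 i).ge
      · rw [hdegd]
        simp only [Pi.add_apply, Finset.sum_add_distrib, hsingle1] at hq ⊢
        omega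
    · rintro ⟨u, v⟩ hq ⟨u', v'⟩ h
      rw [hdegd] at hq
      simp only at hq
      rw [hπ, hπ] at h
      by_cases hv : v = 0
      · rw [hv, map_zero, add_zero] at h
        obtain ⟨h1, h2⟩ := hzero _ _ _ h
        rw [h1, h2, hv]
      · obtain ⟨i, hi⟩ := Function.ne_iff.mp hv
        obtain ⟨w, rfl⟩ := hsplit v i hi
        have hw : w = 0 := by
          simp only [Pi.add_apply, Finset.sum_add_distrib, hsingle1] at hq
          have : ∑ j, w j = 0 := by omega
          ext j
          exact (Finset.sum_eq_zero_iff.mp this) j (Finset.mem_univ j)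
        subst hw
        rw [add_zero, hψ1] at h
        by_cases hv' : v' i = 0
        · exfalso
          apply hmin i i.2
          have : (i : P) = ((-u + u' : AddUnits P) : P) + ψ v' := by
            rw [AddUnits.val_add, add_assoc, h, ← add_assoc, AddUnits.neg_add, zero_add]
          suffices hs : ((-u + u' : AddUnits P) : P) + ψ v' ∈
              AddSubmonoid.closure (U ∪ (T.erase (i : P) : Finset P)) by
            rwa [← this] at hs
          refine add_mem (AddSubmonoid.subset_closure (Or.inl ⟨_, rfl⟩)) ?_
          rw [hψ]
          refine sum_mem fun j _ => ?_
          by_cases hj : j = i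
          · rw [hj, hv', zero_nsmul]; exact zero_mem _
          · have hjm : (j : P) ∈ U ∪ (T.erase (i : P) : Finset P) :=
              Or.inr (Finset.mem_coe.mpr (Finset.mem_erase.mpr ⟨fun h => hj (Subtype.ext h), j.2⟩))
            exact AddSubmonoid.nsmul_mem _ (AddSubmonoid.subset_closure hjm) _
        · obtain ⟨w', rfl⟩ := hsplit v' i hv'
          rw [map_add, hψ1, add_left_comm, add_comm (u : P)] at h
          have h := add_left_cancel h
          obtain ⟨h1, h2⟩ := hzero _ _ _ h
          rw [h1, h2]
  let e : AddUnits P × (T → ℕ) ≃+ P := AddEquiv.ofBijective π ⟨hinj, hsurj⟩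
  refine ⟨T.card, ⟨e.symm.trans ((AddEquiv.refl _).prodCongr ?_)⟩⟩
  exact AddEquiv.arrowCongr T.equivFin (AddEquiv.refl ℕ)


/-- **Smoothness criterion for monoid algebras.** For a fine monoid `P`, the ℂ-algebra
`ℂ[P]` is smooth over `ℂ` iff the sharpening `P/P*` is free; equivalently (for fine `P`),
iff `P` is isomorphic as a monoid to `P* × ℕʳ` for some `r`. -/
theorem monoid_algebra_smooth_iff_sharpening_free
    (P : Type) [AddCommMonoid P] [IsCancelAdd P] (hP : AddMonoid.FG P) :
    Algebra.Smooth ℂ (AddMonoidAlgebra ℂ P) ↔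
      ∃ r : ℕ, Nonempty (P ≃+ AddUnits P × (Fin r → ℕ)) := by
  constructor
  · intro h
    have := h.formallySmooth
    exact exists_equiv_of_smooth P hP
  · rintro ⟨r, ⟨e⟩⟩
    exact smooth_of_equiv P hP r e
end
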